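/- Let d ≥ 2 be an integer and 0 < t < d/(d−1). For every θ ∈ [0,1], the upper and lower θ-intermediate dimensions of G_{t,d} and of F_{t,d} all coincide, and dim_θ G_{t,d} = dim_θ F_{t,d} = d−1 for 0 ≤ θ ≤ (d−1)t/d, while dim_θ G_{t,d} = dim_θ F_{t,d} = d²θ/(dθ + t) for (d−1)t/d < θ ≤ 1. -/

import Mathlib

/-!
The dimensions of `G = G_{t,d}` and `F = F_{t,d}` are trapped between an upper bound for the larger
set `F` and a lower bound for the smaller set `G`. Throughout, `D` is the claimed value.

Upper bound (`pc_cover_cost`, `pc_upper`). Given a cut-off `X = δ^{-a}`, cover each point of `F`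
with denominator `q ≤ X` by a ball of diameter `δ^{1/θ}`; there are about `X^d` of these. The other
points have height at most `X^{-t} = δ^{at}`, so they lie in a slab which is covered by a grid of
balls of diameter `δ`. The cost at exponent `s` is of order
`δ^{s/θ - da} + δ^{s - d + at} + δ^{s - d + 1}`. Taking `a = 1/t` if `θ ≤ (d-1)t/d`, and
`a = d/(dθ+t)` otherwise, makes this small for every `s > D`.

Lower bound `d - 1` (`pc_volume_bound`, `dimH_Gset_ge`). `G` projects onto `[0,1]^{d-1}`.

Lower bound `d²θ/(dθ+t)` (`pc_lower`). Consider the points `(p/q, q^{-t})` of `G` with `q ≤ X` prime,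
where `X = δ^{-d/(dθ+t)}`. By Chebyshev's estimate their number `N` exceeds `X^{d-o(1)}`
(`pc_primes`, `pcA_card`). If two such points with `q ≠ q'` are within distance `r` of each other,
then `|q - q'| ≲ r X^{t+1}`, and the integers `p_i q' - p'_i q` are nonzero and of size at most
`r X²`; since `q, q'` are distinct primes, these integers together with `q, q'` determine the pair.
So there are `≲ r^d X^{2d+t}` such pairs (`pc_offdiag`). Pairs with a common denominator number at
most `X^d (2rX + 1)^{d-1}` (`pc_diag`). For `s < σ < D` the total is at most a constant times
`r^σ N²` for all scales `δ^{1/θ} ≤ r ≤ 2δ` (`pc_params`), and by Cauchy–Schwarz any cover with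
diameters in this range then has `∑ |U_i|^s` bounded below (`pc_energy`). Restricting to prime
denominators replaces any arithmetic on greatest common divisors, at the cost of a logarithm.
-/

open Set MeasureTheory Filter

noncomputable section

/-- Minimal number of closed axis-parallel cubes of side length `δ` needed to cover `S`. -/
def cubeCoverNum (n : ℕ) (δ : ℝ) (S : Set (EuclideanSpace ℝ (Fin n))) : ℕ :=
  sInf {m : ℕ | ∃ c : Fin m → (Fin n → ℝ),
    S ⊆ ⋃ i, {z : EuclideanSpace ℝ (Fin n) | ∀ j, z j ∈ Set.Icc (c i j) (c i j + δ)}}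

-- The popcorn pyramid function `f_{t,d}` on `[0,1]^{d-1}`.
open Classical in
def popcornFun (t : ℝ) (d : ℕ) (x : Fin (d-1) → ℝ) : ℝ :=
  if h : ∃ q : ℕ, ∃ p : Fin (d-1) → ℕ,
      (∀ i, 1 ≤ p i ∧ p i < q ∧ Nat.Coprime (p i) q) ∧ (∀ i, x i = (p i : ℝ) / (q : ℝ))
  then (h.choose : ℝ) ^ (-t)
  else 0

/-- The graph `G_{t,d}` of the popcorn pyramid function, as a subset of `ℝ^d`. -/
def Gset (t : ℝ) (d : ℕ) : Set (EuclideanSpace ℝ (Fin d)) :=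
  {z | ∃ x : Fin (d-1) → ℝ, (∀ i, x i ∈ Set.Icc (0:ℝ) 1) ∧
    (∀ i : Fin (d-1), z (Fin.castLE (Nat.sub_le d 1) i) = x i) ∧
    (∀ j : Fin d, (j : ℕ) = d - 1 → z j = popcornFun t d x)}

/-- The set `F_{t,d} ⊆ ℝ^d`. -/
def Fset (t : ℝ) (d : ℕ) : Set (EuclideanSpace ℝ (Fin d)) :=
  {z | ∃ q : ℕ, ∃ p : Fin (d-1) → ℕ, (∀ i, 1 ≤ p i ∧ p i < q) ∧
      (∀ i : Fin (d-1), z (Fin.castLE (Nat.sub_le d 1) i) = (p i : ℝ) / (q : ℝ)) ∧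
      (∀ j : Fin d, (j : ℕ) = d - 1 → z j = (q : ℝ) ^ (-t))} ∪
  {z | (∀ i : Fin (d-1), z (Fin.castLE (Nat.sub_le d 1) i) ∈ Set.Icc (0:ℝ) 1) ∧
    (∀ j : Fin d, (j : ℕ) = d - 1 → z j = 0)}

/-- Upper box dimension, via covering numbers by closed cubes. -/
def upperBoxDim (n : ℕ) (S : Set (EuclideanSpace ℝ (Fin n))) : ℝ :=
  limsup (fun δ : ℝ => Real.log (cubeCoverNum n δ S) / (-Real.log δ)) (nhdsWithin 0 (Set.Ioi 0))

/-- Lower box dimension, via covering numbers by closed cubes. -/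
def lowerBoxDim (n : ℕ) (S : Set (EuclideanSpace ℝ (Fin n))) : ℝ :=
  liminf (fun δ : ℝ => Real.log (cubeCoverNum n δ S) / (-Real.log δ)) (nhdsWithin 0 (Set.Ioi 0))

/-- Assouad dimension. -/
def assouadDim (n : ℕ) (S : Set (EuclideanSpace ℝ (Fin n))) : ℝ :=
  sInf {α : ℝ | ∃ C : ℝ, 0 < C ∧ ∀ x ∈ S, ∀ r R : ℝ, 0 < r → r < R →
    (cubeCoverNum n r (Metric.closedBall x R ∩ S) : ℝ) ≤ C * (R / r) ^ α}

/-- Upper θ-intermediate dimension (with the convention that `θ = 0` gives Hausdorff dimension).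
Covers are finite, which is no loss of generality since all covering sets have diameter
bounded below by `δ^(1/θ) > 0`. -/
def upperIntDim (n : ℕ) (θ : ℝ) (S : Set (EuclideanSpace ℝ (Fin n))) : ℝ :=
  if θ = 0 then (dimH S).toReal else
  sInf {s : ℝ | 0 ≤ s ∧ ∀ ε : ℝ, 0 < ε → ∃ δ₀ : ℝ, 0 < δ₀ ∧ δ₀ ≤ 1 ∧
    ∀ δ : ℝ, 0 < δ → δ < δ₀ →
    ∃ (m : ℕ) (U : Fin m → Set (EuclideanSpace ℝ (Fin n))),
      S ⊆ (⋃ i, U i) ∧ (∀ i, δ ^ (1/θ) ≤ Metric.diam (U i) ∧ Metric.diam (U i) ≤ δ) ∧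
      (∑ i, Metric.diam (U i) ^ s) ≤ ε}

/-- Lower θ-intermediate dimension (with the convention that `θ = 0` gives Hausdorff dimension). -/
def lowerIntDim (n : ℕ) (θ : ℝ) (S : Set (EuclideanSpace ℝ (Fin n))) : ℝ :=
  if θ = 0 then (dimH S).toReal else
  sInf {s : ℝ | 0 ≤ s ∧ ∀ ε : ℝ, 0 < ε → ∀ δ₀ : ℝ, 0 < δ₀ → δ₀ ≤ 1 →
    ∃ δ : ℝ, 0 < δ ∧ δ < δ₀ ∧
    ∃ (m : ℕ) (U : Fin m → Set (EuclideanSpace ℝ (Fin n))),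
      S ⊆ (⋃ i, U i) ∧ (∀ i, δ ^ (1/θ) ≤ Metric.diam (U i) ∧ Metric.diam (U i) ≤ δ) ∧
      (∑ i, Metric.diam (U i) ^ s) ≤ ε}

/-- `l_t(k,δ) = ⌊(1/(kδ))^(1/t)⌋`. -/
def lfun (t δ : ℝ) (k : ℕ) : ℕ := Nat.floor ((1/((k:ℝ)*δ)) ^ (1/t))

/-- The Duffin–Schaeffer sets `E^{(d-1)}(δ,n) ⊆ ℝ^{d-1}`. -/
def Eset (d : ℕ) (δ : ℝ) (n : ℕ) : Set (EuclideanSpace ℝ (Fin (d-1))) :=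
  {z | ∃ m : Fin (d-1) → ℕ, (∀ i, 1 ≤ m i ∧ m i < n ∧ Nat.Coprime (m i) n) ∧
    ∀ i, z i ∈ Set.Ioo ((m i : ℝ)/(n:ℝ) - δ) ((m i : ℝ)/(n:ℝ) + δ)}

/-- The horizontal-layer input sets `L_{t,d}(δ,k) ⊆ [0,1]^{d-1}`. -/
def Lset (t : ℝ) (d : ℕ) (δ : ℝ) (k : ℕ) : Set (EuclideanSpace ℝ (Fin (d-1))) :=
  {z | ∃ n : ℕ, lfun t δ (k+1) < n ∧ n ≤ lfun t δ k ∧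
    ∃ m : Fin (d-1) → ℕ, (∀ i, 1 ≤ m i ∧ m i < n ∧ Nat.Coprime (m i) n) ∧
    ∀ i, z i = (m i : ℝ)/(n:ℝ)}

end

/-! ### The graph and its projection -/

/-- The point of `ℝ^d` with horizontal coordinates `x` and height `h`. -/
noncomputable def pcPt (d : ℕ) (x : Fin (d-1) → ℝ) (h : ℝ) : EuclideanSpace ℝ (Fin d) :=
  WithLp.toLp 2 (fun j => if hj : (j : ℕ) < d - 1 then x ⟨j, hj⟩ else h)

/-- The horizontal coordinates of a point of `ℝ^d`. -/
def pcProj (d : ℕ) (z : EuclideanSpace ℝ (Fin d)) : Fin (d-1) → ℝ :=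
  fun i => z (Fin.castLE (Nat.sub_le d 1) i)

lemma pcPt_castLE (d : ℕ) (x : Fin (d-1) → ℝ) (h : ℝ) (i : Fin (d-1)) :
    pcPt d x h (Fin.castLE (Nat.sub_le d 1) i) = x i := by
  simp [pcPt]

lemma pcPt_last (d : ℕ) (x : Fin (d-1) → ℝ) (h : ℝ) (j : Fin d) (hj : (j : ℕ) = d - 1) :
    pcPt d x h j = h := by
  simp [pcPt, hj]

lemma pcProj_pt (d : ℕ) (x : Fin (d-1) → ℝ) (h : ℝ) : pcProj d (pcPt d x h) = x := by
  ext i; exact pcPt_castLE d x h i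

lemma eq_pcPt {d : ℕ} {z : EuclideanSpace ℝ (Fin d)} {x : Fin (d-1) → ℝ} {h : ℝ}
    (hx : ∀ i : Fin (d-1), z (Fin.castLE (Nat.sub_le d 1) i) = x i)
    (hh : ∀ j : Fin d, (j : ℕ) = d - 1 → z j = h) : z = pcPt d x h := by
  ext j
  by_cases hj : (j : ℕ) < d - 1
  · have := hx ⟨j, hj⟩
    simp only [pcPt, hj, dif_pos]
    exact this
  · rw [hh j (by omega), pcPt_last d x h j (by omega)]

lemma mem_Gset_iff {t : ℝ} {d : ℕ} {z : EuclideanSpace ℝ (Fin d)} :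
    z ∈ Gset t d ↔ ∃ x : Fin (d-1) → ℝ, (∀ i, x i ∈ Set.Icc (0:ℝ) 1) ∧
      z = pcPt d x (popcornFun t d x) := by
  constructor
  · rintro ⟨x, hx, h1, h2⟩
    exact ⟨x, hx, eq_pcPt h1 h2⟩
  · rintro ⟨x, hx, rfl⟩
    exact ⟨x, hx, fun i => pcPt_castLE _ _ _ _, fun j hj => pcPt_last _ _ _ _ hj⟩

lemma mem_Fset_iff {t : ℝ} {d : ℕ} {z : EuclideanSpace ℝ (Fin d)} :
    z ∈ Fset t d ↔ (∃ q : ℕ, ∃ p : Fin (d-1) → ℕ, (∀ i, 1 ≤ p i ∧ p i < q) ∧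
      z = pcPt d (fun i => (p i : ℝ) / q) ((q : ℝ) ^ (-t))) ∨
      ∃ x : Fin (d-1) → ℝ, (∀ i, x i ∈ Set.Icc (0:ℝ) 1) ∧ z = pcPt d x 0 := by
  constructor
  · rintro (⟨q, p, hp, h1, h2⟩ | ⟨h1, h2⟩)
    · exact Or.inl ⟨q, p, hp, eq_pcPt h1 h2⟩
    · exact Or.inr ⟨pcProj d z, h1, eq_pcPt (fun i => rfl) h2⟩
  · rintro (⟨q, p, hp, rfl⟩ | ⟨x, hx, rfl⟩)
    · exact Or.inl ⟨q, p, hp, fun i => pcPt_castLE _ _ _ _, fun j hj => pcPt_last _ _ _ _ hj⟩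
    · refine Or.inr ⟨fun i => ?_, fun j hj => pcPt_last _ _ _ _ hj⟩
      rw [pcPt_castLE]; exact hx i

lemma Gset_subset_Fset (t : ℝ) (d : ℕ) : Gset t d ⊆ Fset t d := by
  intro z hz
  obtain ⟨x, hx, rfl⟩ := mem_Gset_iff.1 hz
  rw [mem_Fset_iff]
  unfold popcornFun
  split_ifs with h
  · left
    obtain ⟨p, hp, hxp⟩ := h.choose_spec
    refine ⟨h.choose, p, fun i => ⟨(hp i).1, (hp i).2.1⟩, ?_⟩
    congr 1
    ext i; exact hxp i
  · exact Or.inr ⟨x, hx, rfl⟩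

/-- Uniqueness of the reduced denominator pins down the value of the popcorn function. -/
lemma popcornFun_eq {t : ℝ} {d : ℕ} (hd : 2 ≤ d) {q : ℕ} {p : Fin (d-1) → ℕ}
    (hp : ∀ i, 1 ≤ p i ∧ p i < q ∧ Nat.Coprime (p i) q) :
    popcornFun t d (fun i => (p i : ℝ) / q) = (q : ℝ) ^ (-t) := by
  have h : ∃ q' : ℕ, ∃ p' : Fin (d-1) → ℕ,
      (∀ i, 1 ≤ p' i ∧ p' i < q' ∧ Nat.Coprime (p' i) q') ∧
        (∀ i, (p i : ℝ) / q = (p' i : ℝ) / (q' : ℝ)) := ⟨q, p, hp, fun i => rfl⟩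
  unfold popcornFun
  rw [dif_pos h]
  obtain ⟨p', hp', he⟩ := h.choose_spec
  set q' := h.choose
  let i : Fin (d-1) := ⟨0, by omega⟩
  have h1 := hp i
  have h2 := hp' i
  have h3 := he i
  have hq : (q : ℝ) ≠ 0 := by
    have : 0 < q := by omega
    positivity
  have hq' : (q' : ℝ) ≠ 0 := by
    have : 0 < q' := by omega
    positivity
  rw [div_eq_div_iff hq hq'] at h3
  have h4 : p i * q' = p' i * q := by exact_mod_cast h3
  have h5 : q ∣ q' := by
    apply (h1.2.2.symm).dvd_of_dvd_mul_left
    rw [h4]; exact dvd_mul_left _ _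
  have h6 : q' ∣ q := by
    apply (h2.2.2.symm).dvd_of_dvd_mul_left
    rw [← h4]; exact dvd_mul_left _ _
  rw [Nat.dvd_antisymm h6 h5]

lemma pcProj_Gset (t : ℝ) (d : ℕ) : pcProj d '' Gset t d = Set.Icc 0 1 := by
  ext x
  constructor
  · rintro ⟨z, hz, rfl⟩
    obtain ⟨x, hx, rfl⟩ := mem_Gset_iff.1 hz
    rw [pcProj_pt]
    exact ⟨fun i => (hx i).1, fun i => (hx i).2⟩
  · rintro ⟨h0, h1⟩
    exact ⟨_, mem_Gset_iff.2 ⟨x, fun i => ⟨h0 i, h1 i⟩, rfl⟩, pcProj_pt _ _ _⟩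

lemma pcProj_lipschitz (d : ℕ) : LipschitzWith 1 (pcProj d) := by
  refine LipschitzWith.of_dist_le_mul fun x y => ?_
  rw [NNReal.coe_one, one_mul, dist_pi_le_iff dist_nonneg]
  intro i
  simp only [pcProj]
  rw [Real.dist_eq, dist_eq_norm]
  exact PiLp.norm_apply_le (x - y) _

/-- A crude comparison of the Euclidean distance with the coordinatewise one. -/
lemma pc_dist_le {d : ℕ} {x y : EuclideanSpace ℝ (Fin d)} {r : ℝ}
    (h : ∀ j, |x j - y j| ≤ r) : dist x y ≤ d * r := by
  rw [dist_eq_norm]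
  rcases Nat.eq_zero_or_pos d with rfl | hd
  · have : x - y = 0 := by ext j; exact j.elim0
    simp [this]
  have hr : 0 ≤ r := (abs_nonneg _).trans (h ⟨0, hd⟩)
  rw [EuclideanSpace.norm_eq]
  apply Real.sqrt_le_iff.2
  refine ⟨by positivity, ?_⟩
  calc ∑ i, ‖(x - y) i‖ ^ 2 ≤ ∑ i : Fin d, r ^ 2 := by
        gcongr with i
        simpa using h i
    _ = d * r ^ 2 := by simp
    _ ≤ (d * r) ^ 2 := by
        have : (1 : ℝ) ≤ d := by exact_mod_cast hd
        nlinarith [sq_nonneg r, mul_nonneg (by linarith : (0:ℝ) ≤ d - 1) (sq_nonneg r)]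

/-- `G` projects onto the full unit cube. -/
lemma dimH_Gset_ge {t : ℝ} {d : ℕ} : ((d - 1 : ℕ) : ENNReal) ≤ dimH (Gset t d) := by
  have h1 := (pcProj_lipschitz d).dimH_image_le (Gset t d)
  rw [pcProj_Gset] at h1
  have h2 : dimH (Set.Icc (0 : Fin (d-1) → ℝ) 1) = Module.finrank ℝ (Fin (d-1) → ℝ) := by
    apply Real.dimH_of_mem_nhds (x := fun _ => 1/2)
    rw [← Set.pi_univ_Icc]
    exact set_pi_mem_nhds Set.finite_univ fun i _ => Icc_mem_nhds (by norm_num) (by norm_num)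
  simpa [h2] using h1

/-- `F` is a countable set together with a flat cube. -/
lemma dimH_Fset_le {t : ℝ} {d : ℕ} : dimH (Fset t d) ≤ ((d - 1 : ℕ) : ENNReal) := by
  have hsub : Fset t d ⊆ Set.range (fun a : ℕ × (Fin (d-1) → ℕ) =>
      pcPt d (fun i => (a.2 i : ℝ) / a.1) ((a.1 : ℝ) ^ (-t))) ∪
      (fun x => pcPt d x 0) '' Set.univ := by
    intro z hz
    rcases mem_Fset_iff.1 hz with ⟨q, p, -, rfl⟩ | ⟨x, -, rfl⟩
    · exact Or.inl ⟨(q, p), rfl⟩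
    · exact Or.inr ⟨x, trivial, rfl⟩
  refine (dimH_mono hsub).trans ?_
  rw [dimH_union, dimH_countable (Set.countable_range _)]
  have hl : LipschitzWith d (fun x => pcPt d x 0) := by
    refine LipschitzWith.of_dist_le_mul fun x y => ?_
    refine pc_dist_le fun j => ?_
    by_cases hj : (j : ℕ) < d - 1
    · simp only [pcPt, hj, dif_pos]
      exact dist_le_pi_dist x y _
    · simp [pcPt, hj]
  have := hl.dimH_image_le Set.univ
  rw [Real.dimH_univ_pi_fin] at this
  simpa using this

/-! ### Explicit covers and the volume bound -/

lemma pc_tendsto_rpow {e : ℝ} (he : 0 < e) :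
    Tendsto (fun δ : ℝ => δ ^ e) (nhdsWithin 0 (Set.Ioi 0)) (nhds 0) := by
  have h := (Real.continuousAt_rpow_const 0 e (Or.inr he.le)).tendsto
  rw [Real.zero_rpow he.ne'] at h
  exact h.mono_left nhdsWithin_le_nhds

/-- Properties holding for all small positive `δ`, with the threshold taken at most `1`. -/
lemma pc_exists_threshold {P : ℝ → Prop} (h : ∀ᶠ δ in nhdsWithin (0:ℝ) (Set.Ioi 0), P δ) :
    ∃ δ₀ : ℝ, 0 < δ₀ ∧ δ₀ ≤ 1 ∧ ∀ δ, 0 < δ → δ < δ₀ → P δ := by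
  obtain ⟨u, hu, hs⟩ := mem_nhdsGT_iff_exists_Ioo_subset.1 h
  exact ⟨min u 1, lt_min hu one_pos, min_le_right _ _, fun δ h0 h1 =>
    hs ⟨h0, h1.trans_le (min_le_left _ _)⟩⟩

/-- Rounding every coordinate down to the grid `δ' ℕ` moves a point with nonnegative
coordinates by a distance of at most `d δ'`. -/
lemma pc_grid {d : ℕ} (x : Fin (d-1) → ℝ) (h δ' : ℝ) (hδ : 0 < δ') (hx : ∀ i, 0 ≤ x i)
    (hh : 0 ≤ h) :
    dist (pcPt d x h) (pcPt d (fun i => δ' * (⌊x i / δ'⌋₊ : ℝ)) (δ' * (⌊h / δ'⌋₊ : ℝ)))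
      ≤ d * δ' := by
  have key : ∀ y : ℝ, 0 ≤ y → |y - δ' * (⌊y / δ'⌋₊ : ℝ)| ≤ δ' := by
    intro y hy
    have h1 := Nat.floor_le (div_nonneg hy hδ.le)
    have h2 := (Nat.lt_floor_add_one (y / δ')).le
    rw [le_div_iff₀ hδ] at h1
    rw [div_le_iff₀ hδ] at h2
    rw [abs_le]; constructor <;> nlinarith
  refine pc_dist_le fun j => ?_
  by_cases hj : (j : ℕ) < d - 1
  · simpa [pcPt, hj] using key _ (hx ⟨j, hj⟩)
  · simpa [pcPt, hj] using key _ hh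

/-- The explicit cover of `F`: small balls around the points with `q ≤ δ^{-a}`, and a grid of
balls of diameter `δ` for the remaining slab `[0,1]^{d-1} × [0, δ^{at}]`. -/
lemma pc_cover_cost {d : ℕ} (hd : 2 ≤ d) {t θ a δ : ℝ} (ht : 0 < t) (hθ : 0 < θ) (hθ1 : θ ≤ 1)
    (ha : 0 < a) (s : ℝ) (hδ : 0 < δ) (hδ1 : δ ≤ 1) :
    ∃ (m : ℕ) (U : Fin m → Set (EuclideanSpace ℝ (Fin d))),
      Fset t d ⊆ (⋃ i, U i) ∧ (∀ i, δ ^ (1/θ) ≤ Metric.diam (U i) ∧ Metric.diam (U i) ≤ δ) ∧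
      (∑ i, Metric.diam (U i) ^ s) ≤ 2 ^ d * δ ^ (s / θ - d * a) +
        (3 * d) ^ d * (δ ^ (s - d + t * a) + δ ^ (s - d + 1)) := by
  have : Nonempty (Fin d) := ⟨⟨0, by omega⟩⟩
  have hd0 : (0:ℝ) < d := by positivity
  have hd1 : (1:ℝ) ≤ d := by exact_mod_cast (by omega : 1 ≤ d)
  set ρ := δ ^ (1/θ) with hρ
  have hρ0 : 0 < ρ := Real.rpow_pos_of_pos hδ _
  have hρδ : ρ ≤ δ := by
    have : δ ^ (1/θ) ≤ δ ^ (1:ℝ) :=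
      Real.rpow_le_rpow_of_exponent_ge hδ hδ1 (by rw [le_div_iff₀ hθ]; linarith)
    rwa [Real.rpow_one] at this
  set X := δ ^ (-a) with hX
  have hX1 : 1 ≤ X := Real.one_le_rpow_of_pos_of_le_one_of_nonpos hδ hδ1 (by linarith)
  set Q := ⌊X⌋₊ with hQ
  set H := δ ^ (t * a) with hH
  have hH0 : 0 < H := Real.rpow_pos_of_pos hδ _
  set δ' := δ / (2 * d) with hδ'
  have hδ'0 : 0 < δ' := by positivity
  set K := ⌊1 / δ'⌋₊ with hK
  set J := ⌊H / δ'⌋₊ with hJ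
  let ι := (Fin (Q+1) × (Fin (d-1) → Fin (Q+1))) ⊕ ((Fin (d-1) → Fin (K+1)) × Fin (J+1))
  let V : ι → Set (EuclideanSpace ℝ (Fin d)) := Sum.elim
    (fun a => Metric.closedBall (pcPt d (fun i => ((a.2 i : ℕ) : ℝ) / ((a.1 : ℕ) : ℝ))
      (((a.1 : ℕ) : ℝ) ^ (-t))) (ρ/2))
    (fun b => Metric.closedBall (pcPt d (fun i => δ' * ((b.1 i : ℕ) : ℝ)) (δ' * ((b.2 : ℕ) : ℝ)))
      (δ/2))
  have hV1 : ∀ a, Metric.diam (V (Sum.inl a)) = ρ := by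
    intro a
    simp only [V, Sum.elim_inl]
    rw [Metric.diam_closedBall_eq _ (by positivity)]; ring
  have hV2 : ∀ a, Metric.diam (V (Sum.inr a)) = δ := by
    intro a
    simp only [V, Sum.elim_inr]
    rw [Metric.diam_closedBall_eq _ (by positivity)]; ring
  have hslab : ∀ (x : Fin (d-1) → ℝ) (h : ℝ), (∀ i, x i ∈ Set.Icc (0:ℝ) 1) → 0 ≤ h → h ≤ H →
      ∃ i, pcPt d x h ∈ V i := by
    intro x h hx h0 h1
    refine ⟨Sum.inr (fun i => ⟨⌊x i / δ'⌋₊, ?_⟩, ⟨⌊h / δ'⌋₊, ?_⟩), ?_⟩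
    · exact Nat.lt_succ_of_le (Nat.floor_le_floor (by have := (hx i).2; gcongr))
    · exact Nat.lt_succ_of_le (Nat.floor_le_floor (by gcongr))
    · simp only [V, Sum.elim_inr, Metric.mem_closedBall]
      refine (pc_grid x h δ' hδ'0 (fun i => (hx i).1) h0).trans (le_of_eq ?_)
      rw [hδ']; field_simp
  have hcov : Fset t d ⊆ ⋃ i, V i := by
    intro z hz
    rw [Set.mem_iUnion]
    rcases mem_Fset_iff.1 hz with ⟨q, p, hp, rfl⟩ | ⟨x, hx, rfl⟩
    · have hq0 : 0 < q := by have := hp ⟨0, by omega⟩; omega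
      by_cases hq : q ≤ Q
      · refine ⟨Sum.inl (⟨q, by omega⟩, fun i => ⟨p i, by have := hp i; omega⟩), ?_⟩
        simp only [V, Sum.elim_inl]
        exact Metric.mem_closedBall_self (by positivity)
      · apply hslab
        · intro i
          refine ⟨by positivity, ?_⟩
          rw [div_le_one (by positivity)]
          exact_mod_cast (hp i).2.le
        · positivity
        · have hXq : X ≤ q := (Nat.lt_of_floor_lt (not_le.1 hq)).le
          calc (q:ℝ) ^ (-t) ≤ X ^ (-t) :=
                Real.rpow_le_rpow_of_nonpos (by linarith) hXq (by linarith)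
            _ = H := by rw [hX, hH, ← Real.rpow_mul hδ.le]; congr 1; ring
    · exact hslab x 0 hx le_rfl hH0.le
  refine ⟨Fintype.card ι, fun i => V ((Fintype.equivFin ι).symm i), ?_, ?_, ?_⟩
  · intro z hz
    obtain ⟨i, hi⟩ := Set.mem_iUnion.1 (hcov hz)
    exact Set.mem_iUnion.2 ⟨Fintype.equivFin ι i, by simpa using hi⟩
  · intro i
    simp only []
    rcases (Fintype.equivFin ι).symm i with a | a
    · rw [hV1]; exact ⟨le_rfl, hρδ⟩
    · rw [hV2]; exact ⟨hρδ, le_rfl⟩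
  · rw [(Fintype.equivFin ι).symm.sum_comp (fun i => Metric.diam (V i) ^ s),
      Fintype.sum_sum_type]
    simp only [hV1, hV2, Finset.sum_const, Finset.card_univ, nsmul_eq_mul, Fintype.card_prod,
      Fintype.card_fin, Fintype.card_pi, Finset.prod_const]
    push_cast
    have hQ2 : (Q:ℝ) + 1 ≤ 2 * X := by
      have := Nat.floor_le (by linarith : 0 ≤ X); linarith
    have hK2 : (K:ℝ) + 1 ≤ 3 * d / δ := by
      have := Nat.floor_le (by positivity : 0 ≤ 1 / δ')
      have h2 : 1 / δ' = 2 * d / δ := by rw [hδ']; field_simp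
      have h3 : 1 ≤ d / δ := by rw [le_div_iff₀ hδ]; linarith
      have h4 : 3 * d / δ = 2 * d / δ + d / δ := by ring
      linarith
    have hJ2 : (J:ℝ) + 1 ≤ 3 * d * (H / δ + 1) := by
      have := Nat.floor_le (by positivity : 0 ≤ H / δ')
      have h2 : H / δ' = 2 * d * (H / δ) := by rw [hδ']; field_simp
      have : 0 ≤ H / δ := by positivity
      nlinarith
    have hdd : d = d - 1 + 1 := by omega
    have hcast : ((d - 1 : ℕ) : ℝ) = d - 1 := by
      rw [Nat.cast_sub (by omega)]; simp
    apply add_le_add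
    · calc ((Q:ℝ)+1) * ((Q:ℝ)+1) ^ (d-1) * ρ ^ s = ((Q:ℝ)+1) ^ d * ρ ^ s := by
            rw [← pow_succ', ← hdd]
        _ ≤ (2 * X) ^ d * ρ ^ s := by gcongr
        _ = 2 ^ d * δ ^ (s / θ - d * a) := by
            rw [mul_pow, mul_assoc, hX, hρ, ← Real.rpow_natCast, ← Real.rpow_natCast (δ ^ (-a)),
              ← Real.rpow_mul hδ.le, ← Real.rpow_mul hδ.le, ← Real.rpow_add hδ]
            congr 2; ring
    · calc ((K:ℝ)+1) ^ (d-1) * ((J:ℝ)+1) * δ ^ s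
          ≤ (3 * d / δ) ^ (d-1) * (3 * d * (H / δ + 1)) * δ ^ s := by gcongr
        _ = (3 * d) ^ d * ((H / δ + 1) * (δ ^ s / δ ^ (d-1))) := by
            rw [div_pow]; nth_rw 6 [hdd]; rw [pow_succ]; ring
        _ = _ := by
            have e1 : δ ^ s / δ ^ (d-1) = δ ^ (s - d + 1) := by
              rw [← Real.rpow_natCast, ← Real.rpow_sub hδ, hcast]; congr 1; ring
            have e2 : H / δ * δ ^ (s - d + 1) = δ ^ (s - d + t * a) := by
              rw [hH, div_mul_eq_mul_div, ← Real.rpow_add hδ, div_eq_mul_inv, ← Real.rpow_neg_one,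
                ← Real.rpow_add hδ]
              congr 1; ring
            rw [e1, add_mul, e2, one_mul]

/-- Covers of `F` of arbitrarily small cost at scale `δ`: both terms in the cost of the explicit
cover with cut-off `δ^{-a}` tend to zero under the stated conditions on `s`. -/
lemma pc_upper {d : ℕ} (hd : 2 ≤ d) {t θ a s : ℝ} (ht : 0 < t) (hθ : 0 < θ) (hθ1 : θ ≤ 1)
    (ha : 0 < a) (h1 : d * a * θ < s) (h2 : d - t * a < s) (h3 : (d:ℝ) - 1 < s)
    (ε : ℝ) (hε : 0 < ε) :
    ∃ δ₀ : ℝ, 0 < δ₀ ∧ δ₀ ≤ 1 ∧ ∀ δ : ℝ, 0 < δ → δ < δ₀ →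
    ∃ (m : ℕ) (U : Fin m → Set (EuclideanSpace ℝ (Fin d))),
      Fset t d ⊆ (⋃ i, U i) ∧ (∀ i, δ ^ (1/θ) ≤ Metric.diam (U i) ∧ Metric.diam (U i) ≤ δ) ∧
      (∑ i, Metric.diam (U i) ^ s) ≤ ε := by
  have e1 : 0 < s / θ - d * a := by
    rw [sub_pos, lt_div_iff₀ hθ]; exact h1
  have T : Tendsto (fun δ : ℝ => 2 ^ d * δ ^ (s / θ - d * a) +
        (3 * (d:ℝ)) ^ d * (δ ^ (s - d + t * a) + δ ^ (s - d + 1)))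
        (nhdsWithin 0 (Set.Ioi 0)) (nhds 0) := by
    have := ((pc_tendsto_rpow e1).const_mul (2 ^ d)).add
      (((pc_tendsto_rpow (by linarith : 0 < s - d + t * a)).add
        (pc_tendsto_rpow (by linarith : 0 < s - d + 1))).const_mul ((3 * (d:ℝ)) ^ d))
    simpa using this
  obtain ⟨δ₀, h0, hle, hδ⟩ := pc_exists_threshold (T.eventually (ge_mem_nhds hε))
  refine ⟨δ₀, h0, hle, fun δ hp hlt => ?_⟩
  obtain ⟨m, U, hc, hdm, hs⟩ := pc_cover_cost hd ht hθ hθ1 ha s hp (hlt.le.trans hle)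
  exact ⟨m, U, hc, hdm, hs.trans (hδ δ hp hlt)⟩

/-- Volume bound: any finite cover of `G` by sets of positive diameter projects to a cover of the
unit cube. -/
lemma pc_volume_bound {d : ℕ} (t : ℝ) {m : ℕ}
    {U : Fin m → Set (EuclideanSpace ℝ (Fin d))} (hcov : Gset t d ⊆ ⋃ i, U i)
    (hU : ∀ i, 0 < Metric.diam (U i)) :
    1 ≤ ∑ i, (2 * Metric.diam (U i)) ^ (d - 1) := by
  have hball : ∀ i, ∃ c : Fin (d-1) → ℝ,
      pcProj d '' U i ⊆ Metric.closedBall c (Metric.diam (U i)) := by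
    intro i
    have hb : Bornology.IsBounded (U i) := by
      by_contra hb
      have := hU i
      rw [Metric.diam_eq_zero_of_unbounded hb] at this
      exact lt_irrefl _ this
    have hne : (U i).Nonempty := by
      by_contra hne
      rw [Set.not_nonempty_iff_eq_empty] at hne
      have := hU i
      rw [hne, Metric.diam_empty] at this
      exact lt_irrefl _ this
    obtain ⟨c, hc⟩ := hne
    refine ⟨pcProj d c, ?_⟩
    rintro _ ⟨z, hz, rfl⟩
    rw [Metric.mem_closedBall]
    refine ((pcProj_lipschitz d).dist_le_mul z c).trans ?_
    simpa using Metric.dist_le_diam_of_mem hb hz hc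
  choose c hc using hball
  have hsub : Set.Icc (0 : Fin (d-1) → ℝ) 1 ⊆
      ⋃ i, Metric.closedBall (c i) (Metric.diam (U i)) := by
    rw [← pcProj_Gset t d]
    rintro _ ⟨z, hz, rfl⟩
    obtain ⟨i, hi⟩ := Set.mem_iUnion.1 (hcov hz)
    exact Set.mem_iUnion.2 ⟨i, hc i ⟨z, hi, rfl⟩⟩
  have h1 := (measure_mono (μ := volume) hsub).trans (measure_iUnion_le _)
  rw [Real.volume_Icc_pi, tsum_fintype] at h1
  simp only [Pi.one_apply, Pi.zero_apply, sub_zero, ENNReal.ofReal_one, Finset.prod_const_one] at h1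
  have h2 : ∀ i, volume (Metric.closedBall (c i) (Metric.diam (U i))) =
      ENNReal.ofReal ((2 * Metric.diam (U i)) ^ (d-1)) := by
    intro i
    rw [Real.volume_pi_closedBall _ (hU i).le]
    simp
  simp only [h2] at h1
  rw [← ENNReal.ofReal_sum_of_nonneg (fun i _ => by have := hU i; positivity)] at h1
  exact ENNReal.one_le_ofReal.1 h1

/-! ### Counting near pairs of points with prime denominators -/

/-- The finite test set: pairs `(q, p)` with `q ≤ X` prime and `1 ≤ p i < q`. -/
noncomputable def pcA (n : ℕ) (X : ℝ) : Finset (ℕ × (Fin n → ℕ)) :=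
  ((Finset.Icc 1 ⌊X⌋₊) ×ˢ Fintype.piFinset (fun _ => Finset.Icc 1 ⌊X⌋₊)).filter
    (fun a => a.1.Prime ∧ ∀ i, a.2 i < a.1)

/-- Two test points are `r`-near if all coordinates of the corresponding points of the graph
differ by at most `r`. -/
def pcNear {n : ℕ} (t r : ℝ) (a b : ℕ × (Fin n → ℕ)) : Prop :=
  |(a.1 : ℝ) ^ (-t) - (b.1 : ℝ) ^ (-t)| ≤ r ∧
    ∀ i, |(a.2 i : ℝ) / a.1 - (b.2 i : ℝ) / b.1| ≤ r

lemma mem_pcA {n : ℕ} {X : ℝ} {a : ℕ × (Fin n → ℕ)} : a ∈ pcA n X ↔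
    ((1 ≤ a.1 ∧ a.1 ≤ ⌊X⌋₊) ∧ ∀ i, 1 ≤ a.2 i ∧ a.2 i ≤ ⌊X⌋₊) ∧ a.1.Prime ∧ ∀ i, a.2 i < a.1 := by
  simp [pcA, Fintype.mem_piFinset]

/-- Heights determine denominators up to an error `r X^{t+1} / t`, by the mean value theorem. -/
lemma pc_height_aux {t X x y : ℝ} (ht : 0 < t) (hx : 1 ≤ x) (hxy : x < y) (hy : y ≤ X) :
    (y - x) * t ≤ (x ^ (-t) - y ^ (-t)) * X ^ (t + 1) := by
  have hX : 0 < X := by linarith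
  obtain ⟨c, hc, he⟩ := exists_hasDerivAt_eq_slope (fun u : ℝ => u ^ (-t))
    (fun u => (-t) * u ^ (-t-1)) hxy
    (fun u hu => (Real.continuousAt_rpow_const u (-t)
      (Or.inl (by have := hu.1; linarith))).continuousWithinAt)
    (fun u hu => Real.hasDerivAt_rpow_const (Or.inl (by have := hu.1; linarith)))
  have hc0 : 0 < c := by linarith [hc.1]
  rw [eq_div_iff (by linarith)] at he
  have h1 : x ^ (-t) - y ^ (-t) = t * c ^ (-t-1) * (y - x) := by linarith
  have h2 : 1 ≤ c ^ (-t-1) * X ^ (t+1) := by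
    have h3 : X ^ (-t-1) ≤ c ^ (-t-1) :=
      Real.rpow_le_rpow_of_nonpos hc0 (by linarith [hc.2]) (by linarith)
    calc (1:ℝ) = X ^ (-t-1) * X ^ (t+1) := by
          rw [← Real.rpow_add hX, show -t-1+(t+1) = 0 by ring, Real.rpow_zero]
      _ ≤ _ := by gcongr
  rw [h1]
  have h4 : 0 ≤ (y - x) * t := by apply mul_nonneg <;> linarith
  calc (y-x) * t ≤ (y - x) * t * (c ^ (-t-1) * X ^ (t+1)) := le_mul_of_one_le_right h4 h2
    _ = _ := by ring

lemma pc_height {t X r x y : ℝ} (ht : 0 < t) (hx : 1 ≤ x) (hy : 1 ≤ y) (hxX : x ≤ X) (hyX : y ≤ X)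
    (h : |x ^ (-t) - y ^ (-t)| ≤ r) : |x - y| ≤ r * X ^ (t+1) / t := by
  have hX : 0 ≤ X ^ (t+1) := Real.rpow_nonneg (by linarith) _
  rw [le_div_iff₀ ht]
  rcases lt_trichotomy x y with hlt | rfl | hlt
  · rw [abs_sub_comm, abs_of_pos (by linarith)]
    refine (pc_height_aux ht hx hlt hyX).trans ?_
    gcongr
    exact (le_abs_self _).trans h
  · simp only [sub_self, abs_zero, zero_mul]
    exact mul_nonneg ((abs_nonneg _).trans h) hX
  · rw [abs_of_pos (by linarith)]
    refine (pc_height_aux ht hy hlt hxX).trans ?_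
    gcongr
    rw [abs_sub_comm] at h
    exact (le_abs_self _).trans h

lemma pc_int_mem {k : ℤ} {y : ℝ} (h : |(k:ℝ)| ≤ y) : k ∈ Finset.Icc (-(⌊y⌋₊:ℤ)) (⌊y⌋₊:ℤ) := by
  have h1 : (k.natAbs : ℝ) ≤ y := by rwa [Nat.cast_natAbs, Int.cast_abs]
  have h2 := Nat.le_floor h1
  rw [Finset.mem_Icc]; omega

lemma pc_card_Icc (k : ℕ) : (Finset.Icc (-(k:ℤ)) k).card = 2 * k + 1 := by
  rw [Int.card_Icc]; omega

lemma pc_card_Icc_erase (k : ℕ) : ((Finset.Icc (-(k:ℤ)) k).erase 0).card = 2 * k := by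
  rw [Finset.card_erase_of_mem (by simp), pc_card_Icc]; omega

open Classical in
/-- Near pairs with distinct denominators `q ≠ q'`: the data `q`, `q' - q` and the nonzero integers
`p i * q' - p' i * q` determine the pair, because `q` and `q'` are distinct primes. -/
lemma pc_offdiag {n : ℕ} {t X r : ℝ} (ht : 0 < t) (hX : 1 ≤ X) (hr : 0 ≤ r) :
    ((((pcA n X) ×ˢ (pcA n X)).filter
      (fun ab => ab.1.1 ≠ ab.2.1 ∧ pcNear t r ab.1 ab.2)).card : ℝ) ≤
      X * (2 * (r * X ^ (t+1) / t)) * (2 * (r * X ^ 2)) ^ n := by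
  have hXpos : 0 ≤ X ^ (t+1) := Real.rpow_nonneg (by linarith) _
  set L := ⌊r * X ^ (t+1) / t⌋₊ with hL
  set K := ⌊r * X ^ 2⌋₊ with hK
  set T : Finset (ℕ × ℤ × (Fin n → ℤ)) := Finset.Icc 1 ⌊X⌋₊ ×ˢ
    ((Finset.Icc (-(L:ℤ)) L).erase 0) ×ˢ
    Fintype.piFinset (fun _ => (Finset.Icc (-(K:ℤ)) K).erase 0) with hT
  have hle : (((pcA n X) ×ˢ (pcA n X)).filter
      (fun ab => ab.1.1 ≠ ab.2.1 ∧ pcNear t r ab.1 ab.2)).card ≤ T.card := by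
    refine Finset.card_le_card_of_injOn (fun ab => (ab.1.1, (ab.1.1 : ℤ) - ab.2.1,
      fun i => (ab.1.2 i : ℤ) * ab.2.1 - ab.2.2 i * ab.1.1)) ?_ ?_
    · rintro ⟨⟨q, p⟩, ⟨q', p'⟩⟩ hab
      simp only [Finset.coe_filter, Finset.mem_product, mem_pcA, Set.mem_ofPred_eq] at hab
      obtain ⟨⟨⟨⟨hq, hp⟩, hqp, hpq⟩, ⟨⟨hq', hp'⟩, hqp', hpq'⟩⟩, hne, hn1, hn2⟩ := hab
      simp only at hq hp hqp hpq hq' hp' hqp' hpq' hne hn1 hn2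
      have hqX : (q:ℝ) ≤ X := (Nat.le_floor_iff (by linarith)).1 hq.2
      have hqX' : (q':ℝ) ≤ X := (Nat.le_floor_iff (by linarith)).1 hq'.2
      have hq1 : (1:ℝ) ≤ q := by exact_mod_cast hq.1
      have hq1' : (1:ℝ) ≤ q' := by exact_mod_cast hq'.1
      simp only [hT, Finset.coe_product, Set.mem_prod, Finset.mem_coe, Finset.mem_Icc,
        Fintype.mem_piFinset, Finset.mem_erase]
      refine ⟨hq, ⟨by omega, ?_⟩, fun i => ⟨?_, ?_⟩⟩
      · rw [← Finset.mem_Icc]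
        apply pc_int_mem
        push_cast
        exact pc_height ht hq1 hq1' hqX hqX' hn1
      · intro h0
        have h1 : p i * q' = p' i * q := by
          have : (p i : ℤ) * q' = p' i * q := by linarith
          exact_mod_cast this
        have h2 : q ∣ p i * q' := h1 ▸ dvd_mul_left _ _
        rcases hqp.dvd_mul.1 h2 with h3 | h3
        · have := Nat.le_of_dvd (hp i).1 h3
          have := hpq i
          omega
        · exact hne ((Nat.prime_dvd_prime_iff_eq hqp hqp').1 h3)
      · rw [← Finset.mem_Icc]
        apply pc_int_mem
        push_cast
        have h1 : (p i : ℝ) * q' - p' i * q = (p i / q - p' i / q') * (q * q') := by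
          field_simp
        rw [h1, abs_mul, abs_of_pos (by positivity : (0:ℝ) < q * q'), pow_two]
        gcongr
        exact hn2 i
    · rintro ⟨⟨q, p⟩, ⟨q', p'⟩⟩ hab ⟨⟨u, v⟩, ⟨u', v'⟩⟩ huv he
      simp only [Finset.coe_filter, Finset.mem_product, mem_pcA, Set.mem_ofPred_eq] at hab huv
      obtain ⟨⟨⟨⟨hq, hp⟩, hqp, hpq⟩, ⟨⟨hq', hp'⟩, hqp', hpq'⟩⟩, hne, -⟩ := hab
      obtain ⟨⟨⟨⟨-, hv⟩, -, hvu⟩, ⟨⟨-, hv'⟩, -, hvu'⟩⟩, -⟩ := huv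
      simp only [Prod.mk.injEq] at he hpq hvu hne hqp hqp' hpq' hvu'
      obtain ⟨rfl, h2, h3⟩ := he
      obtain rfl : q' = u' := by omega
      have hpv : ∀ i, p i = v i := by
        intro i
        have h4 := congrFun h3 i
        have h5 : ((p i : ℤ) - v i) * q' = (p' i - v' i) * q := by linarith
        have h6 : (q:ℤ) ∣ (p i : ℤ) - v i := by
          have h7 : (q:ℤ) ∣ ((p i : ℤ) - v i) * q' := h5 ▸ dvd_mul_left _ _
          rcases (Nat.prime_iff_prime_int.1 hqp).dvd_mul.1 h7 with h8 | h8
          · exact h8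
          · exact absurd ((Nat.prime_dvd_prime_iff_eq hqp hqp').1 (Int.natCast_dvd_natCast.1 h8)) hne
        have h9 := Int.eq_zero_of_abs_lt_dvd h6 (by
          have := hpq i
          have := hvu i
          rw [abs_lt]; constructor <;> omega)
        omega
      obtain rfl : p = v := funext hpv
      have : p' = v' := by
        funext i
        have h4 := congrFun h3 i
        have h5 : (p' i : ℤ) * q = v' i * q := by linarith
        have h6 := mul_right_cancel₀ (by have := hqp.pos; omega) h5
        exact_mod_cast h6
      rw [this]
  have hTc : T.card = ⌊X⌋₊ * (2 * L * (2 * K) ^ n) := by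
    simp only [hT, Finset.card_product, Fintype.card_piFinset, pc_card_Icc_erase,
      Finset.prod_const, Finset.card_univ, Fintype.card_fin, Nat.card_Icc, Nat.add_sub_cancel]
  calc _ ≤ (T.card : ℝ) := by exact_mod_cast hle
    _ = (⌊X⌋₊ : ℝ) * (2 * L * (2 * K) ^ n) := by rw [hTc]; push_cast; ring
    _ ≤ X * (2 * (r * X ^ (t+1) / t) * (2 * (r * X ^ 2)) ^ n) := by
        gcongr
        · exact Nat.floor_le (by linarith)
        · exact Nat.floor_le (by positivity)
        · exact Nat.floor_le (by positivity)
    _ = _ := by ring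

open Classical in
/-- Near pairs with equal denominators `q`: the numerators differ by integers of size at most
`r q ≤ r X`. -/
lemma pc_diag {n : ℕ} {t X r : ℝ} (hX : 1 ≤ X) (hr : 0 ≤ r) :
    ((((pcA n X) ×ˢ (pcA n X)).filter
      (fun ab => ab.1.1 = ab.2.1 ∧ pcNear t r ab.1 ab.2)).card : ℝ) ≤
      X * X ^ n * (2 * (r * X) + 1) ^ n := by
  set K := ⌊r * X⌋₊ with hK
  set T : Finset (ℕ × (Fin n → ℕ) × (Fin n → ℤ)) := Finset.Icc 1 ⌊X⌋₊ ×ˢ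
    Fintype.piFinset (fun _ => Finset.Icc 1 ⌊X⌋₊) ×ˢ
    Fintype.piFinset (fun _ => (Finset.Icc (-(K:ℤ)) K)) with hT
  have hle : (((pcA n X) ×ˢ (pcA n X)).filter
      (fun ab => ab.1.1 = ab.2.1 ∧ pcNear t r ab.1 ab.2)).card ≤ T.card := by
    refine Finset.card_le_card_of_injOn (fun ab => (ab.1.1, ab.1.2,
      fun i => (ab.1.2 i : ℤ) - ab.2.2 i)) ?_ ?_
    · rintro ⟨⟨q, p⟩, ⟨q', p'⟩⟩ hab
      simp only [Finset.coe_filter, Finset.mem_product, mem_pcA, Set.mem_ofPred_eq] at hab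
      obtain ⟨⟨⟨⟨hq, hp⟩, hqp, hpq⟩, ⟨⟨hq', hp'⟩, hqp', hpq'⟩⟩, rfl, hn1, hn2⟩ := hab
      simp only at hq hp hqp hpq hn1 hn2
      have hqX : (q:ℝ) ≤ X := (Nat.le_floor_iff (by linarith)).1 hq.2
      have hq1 : (1:ℝ) ≤ q := by exact_mod_cast hq.1
      simp only [hT, Finset.coe_product, Set.mem_prod, Finset.mem_coe, Finset.mem_Icc,
        Fintype.mem_piFinset]
      refine ⟨hq, hp, fun i => ?_⟩
      rw [← Finset.mem_Icc]
      apply pc_int_mem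
      push_cast
      have h1 : (p i : ℝ) - p' i = (p i / q - p' i / q) * q := by
        field_simp
      rw [h1, abs_mul, abs_of_pos (by positivity : (0:ℝ) < q)]
      gcongr
      exact hn2 i
    · rintro ⟨⟨q, p⟩, ⟨q', p'⟩⟩ hab ⟨⟨u, v⟩, ⟨u', v'⟩⟩ huv he
      simp only [Finset.coe_filter, Finset.mem_product, mem_pcA, Set.mem_ofPred_eq] at hab huv
      obtain ⟨-, rfl, -⟩ := hab
      obtain ⟨-, rfl, -⟩ := huv
      simp only [Prod.mk.injEq] at he
      obtain ⟨rfl, rfl, h3⟩ := he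
      have : p' = v' := by
        funext i
        have h4 := congrFun h3 i
        omega
      rw [this]
  have hTc : T.card = ⌊X⌋₊ * (⌊X⌋₊ ^ n * (2 * K + 1) ^ n) := by
    simp only [hT, Finset.card_product, Fintype.card_piFinset, pc_card_Icc,
      Finset.prod_const, Finset.card_univ, Fintype.card_fin, Nat.card_Icc, Nat.add_sub_cancel]
  calc _ ≤ (T.card : ℝ) := by exact_mod_cast hle
    _ = (⌊X⌋₊ : ℝ) * (⌊X⌋₊ ^ n * (2 * K + 1) ^ n) := by rw [hTc]; push_cast; ring
    _ ≤ X * (X ^ n * (2 * (r * X) + 1) ^ n) := by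
        gcongr
        · exact Nat.floor_le (by linarith)
        · exact Nat.floor_le (by linarith)
        · exact Nat.floor_le (by positivity)
    _ = _ := by ring

open Classical in
/-- Total count of near pairs of test points. -/
lemma pc_pairs {n : ℕ} {t X r : ℝ} (ht : 0 < t) (hX : 1 ≤ X) (hr : 0 ≤ r) :
    ((((pcA n X) ×ˢ (pcA n X)).filter (fun ab => pcNear t r ab.1 ab.2)).card : ℝ) ≤
      X * (2 * (r * X ^ (t+1) / t)) * (2 * (r * X ^ 2)) ^ n +
      X * X ^ n * (2 * (r * X) + 1) ^ n := by
  refine le_trans ?_ (add_le_add (pc_offdiag (n := n) ht hX hr) (pc_diag (n := n) (t := t) hX hr))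
  have : ((pcA n X) ×ˢ (pcA n X)).filter (fun ab => pcNear t r ab.1 ab.2) ⊆
      (((pcA n X) ×ˢ (pcA n X)).filter (fun ab => ab.1.1 ≠ ab.2.1 ∧ pcNear t r ab.1 ab.2)) ∪
      (((pcA n X) ×ˢ (pcA n X)).filter (fun ab => ab.1.1 = ab.2.1 ∧ pcNear t r ab.1 ab.2)) := by
    intro ab hab
    simp only [Finset.mem_union, Finset.mem_filter] at hab ⊢
    tauto
  exact_mod_cast (Finset.card_le_card this).trans (Finset.card_union_le _ _)

/-! ### The energy argument -/

open Classical in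
/-- Abstract energy argument. A finite set `A` of `N` points is distributed over sets of sizes
`w i ∈ [ρ, δ]`, points in the same class being near at scale `w i`. If the number of near pairs
at every scale `r` is at most `B r^σ N²`, then for `s < σ` the sum `∑ w i ^ s` is bounded below.
This is Cauchy–Schwarz plus a dyadic decomposition of the scales. -/
lemma pc_energy {α : Type*} (A : Finset α) (near : ℝ → α → α → Prop)
    (hmono : ∀ r r' a b, r ≤ r' → near r a b → near r' a b)
    {m : ℕ} (f : α → Fin m) (w : Fin m → ℝ) {ρ δ B s σ : ℝ} (hρ : 0 < ρ) (hδ : δ ≤ 1)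
    (hs : s < σ) (hw : ∀ i, ρ ≤ w i ∧ w i ≤ δ)
    (hf : ∀ a ∈ A, ∀ b ∈ A, f a = f b → near (w (f a)) a b) (hs0 : 0 ≤ s)
    (hB : ∀ r, ρ ≤ r → r ≤ 2 * δ →
      (((A ×ˢ A).filter (fun ab => near r ab.1 ab.2)).card : ℝ) ≤ B * r ^ σ * (A.card : ℝ) ^ 2)
    (hA : A.Nonempty) :
    1 ≤ (∑ i, w i ^ s) * (2 ^ s * B * (1 - (1/2) ^ (σ - s))⁻¹) := by
  have hw0 : ∀ i, 0 < w i := fun i => hρ.trans_le (hw i).1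
  have hex : ∀ i, ∃ k : ℕ, ((1:ℝ)/2) ^ (k+1) < w i ∧ w i ≤ ((1:ℝ)/2) ^ k := fun i =>
    exists_nat_pow_near_of_lt_one (hw0 i) ((hw i).2.trans hδ) (by norm_num) (by norm_num)
  -- `j i` is the dyadic level of the size `w i`
  choose j hj1 hj2 using hex
  set N : ℝ := (A.card : ℝ) with hN
  have hN0 : 0 < N := by rw [hN]; exact_mod_cast hA.card_pos
  let c : Fin m → Finset α := fun i => A.filter (fun a => f a = i)
  have hcard : N = ∑ i, ((c i).card : ℝ) := by
    rw [hN, Finset.card_eq_sum_card_fiberwise (f := f) (t := Finset.univ) (by simp)]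
    push_cast; rfl
  have hCS : N ^ 2 ≤ (∑ i, w i ^ s) * ∑ i, ((c i).card : ℝ) ^ 2 * w i ^ (-s) := by
    rw [hcard]
    apply Finset.sum_sq_le_sum_mul_sum_of_sq_le_mul
    · intro i _; exact Real.rpow_nonneg (hw0 i).le _
    · intro i _; exact mul_nonneg (by positivity) (Real.rpow_nonneg (hw0 i).le _)
    · intro i _
      have : w i ^ s * w i ^ (-s) = 1 := by
        rw [← Real.rpow_add (hw0 i)]; simp
      refine le_of_eq ?_
      linear_combination (-((c i).card : ℝ) ^ 2) * this
  set x : ℝ := (1/2) ^ (σ - s) with hx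
  have hx0 : 0 < x := by positivity
  have hx1 : x < 1 := Real.rpow_lt_one (by norm_num) (by norm_num) (by linarith)
  have hB0 : 0 ≤ B := by
    obtain ⟨a, ha⟩ := hA
    have h1 := hB (w (f a)) (hw _).1 (by linarith [hw0 (f a), (hw (f a)).2])
    by_contra hneg
    have : B * w (f a) ^ σ * N ^ 2 < 0 := by
      apply mul_neg_of_neg_of_pos _ (by positivity)
      exact mul_neg_of_neg_of_pos (not_le.1 hneg) (Real.rpow_pos_of_pos (hw0 _) _)
    have : (0:ℝ) ≤ (((A ×ˢ A).filter (fun ab => near (w (f a)) ab.1 ab.2)).card : ℝ) := by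
      positivity
    linarith
  -- within one dyadic level, pairs of points in a common class are near at the scale of the level
  have hclass : ∀ k ∈ Finset.univ.image j,
      ∑ i ∈ Finset.univ.filter (fun i => j i = k), ((c i).card : ℝ) ^ 2 * w i ^ (-s)
        ≤ 2 ^ s * B * N ^ 2 * x ^ k := by
    intro k hk
    obtain ⟨i0, -, rfl⟩ := Finset.mem_image.1 hk
    set k := j i0
    set r : ℝ := (1/2) ^ k with hr
    have hr0 : 0 < r := by positivity
    have h1 : ∀ i ∈ Finset.univ.filter (fun i => j i = k),
        ((c i).card : ℝ) ^ 2 * w i ^ (-s) ≤ (2 ^ s * r ^ (-s)) * ((c i).card : ℝ) ^ 2 := by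
      intro i hi
      rw [mul_comm]
      refine mul_le_mul_of_nonneg_right ?_ (by positivity)
      have hik := (Finset.mem_filter.1 hi).2
      have h2 := hj1 i
      rw [hik, pow_succ, ← hr] at h2
      calc w i ^ (-s) ≤ (r * (1/2)) ^ (-s) :=
            Real.rpow_le_rpow_of_nonpos (by positivity) h2.le (by linarith)
        _ = 2 ^ s * r ^ (-s) := by
            have h5 : ((1:ℝ)/2) ^ (-s) = 2 ^ s := by
              rw [one_div, Real.inv_rpow (by norm_num), Real.rpow_neg (by norm_num), inv_inv]
            rw [Real.mul_rpow hr0.le (by norm_num), h5, mul_comm]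
    have h3 : ∑ i ∈ Finset.univ.filter (fun i => j i = k), ((c i).card : ℝ) ^ 2 ≤
        (((A ×ˢ A).filter (fun ab => near r ab.1 ab.2)).card : ℝ) := by
      have h4 : ∑ i ∈ Finset.univ.filter (fun i => j i = k), (c i ×ˢ c i).card ≤
          ((A ×ˢ A).filter (fun ab => near r ab.1 ab.2)).card := by
        rw [← Finset.card_biUnion]
        · apply Finset.card_le_card
          intro ab hab
          obtain ⟨i, hi, hab⟩ := Finset.mem_biUnion.1 hab
          have hik := (Finset.mem_filter.1 hi).2
          obtain ⟨ha, hb⟩ := Finset.mem_product.1 hab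
          obtain ⟨ha, hfa⟩ := Finset.mem_filter.1 ha
          obtain ⟨hb, hfb⟩ := Finset.mem_filter.1 hb
          refine Finset.mem_filter.2 ⟨Finset.mem_product.2 ⟨ha, hb⟩, ?_⟩
          refine hmono (w i) r _ _ ?_ ?_
          · have := hj2 i; rwa [hik] at this
          · have := hf _ ha _ hb (hfa.trans hfb.symm); rwa [hfa] at this
        · intro i _ i' _ hne
          rw [Function.onFun, Finset.disjoint_left]
          intro ab h1 h2
          apply hne
          rw [← (Finset.mem_filter.1 (Finset.mem_product.1 h1).1).2,
            ← (Finset.mem_filter.1 (Finset.mem_product.1 h2).1).2]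
      calc _ = ((∑ i ∈ Finset.univ.filter (fun i => j i = k), (c i ×ˢ c i).card : ℕ) : ℝ) := by
            push_cast [Finset.card_product]
            exact Finset.sum_congr rfl fun i _ => pow_two _
        _ ≤ _ := by exact_mod_cast h4
    have hrw : ρ ≤ r := (hw i0).1.trans (hj2 i0)
    have hrd : r ≤ 2 * δ := by
      have h2 := hj1 i0
      rw [pow_succ] at h2
      have := (hw i0).2
      change r * (1/2) < _ at h2
      linarith
    calc _ ≤ ∑ i ∈ Finset.univ.filter (fun i => j i = k),
              (2 ^ s * r ^ (-s)) * ((c i).card : ℝ) ^ 2 := Finset.sum_le_sum h1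
      _ = (2 ^ s * r ^ (-s)) * ∑ i ∈ Finset.univ.filter (fun i => j i = k),
              ((c i).card : ℝ) ^ 2 := by rw [Finset.mul_sum]
      _ ≤ (2 ^ s * r ^ (-s)) * (B * r ^ σ * N ^ 2) := by
            refine mul_le_mul_of_nonneg_left (h3.trans (hB r hrw hrd)) (by positivity)
      _ = 2 ^ s * B * N ^ 2 * (r ^ σ * r ^ (-s)) := by ring
      _ = 2 ^ s * B * N ^ 2 * x ^ k := by
            have h5 : r ^ σ * r ^ (-s) = x ^ k := by
              rw [← Real.rpow_add hr0, hr, hx, ← Real.rpow_natCast (1/2) k,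
                ← Real.rpow_natCast ((1/2) ^ (σ - s)) k,
                ← Real.rpow_mul (by norm_num), ← Real.rpow_mul (by norm_num)]
              congr 1; ring
            rw [h5]
  have hsum : ∑ i, ((c i).card : ℝ) ^ 2 * w i ^ (-s) ≤ 2 ^ s * B * N ^ 2 * (1 - x)⁻¹ := by
    rw [← Finset.sum_fiberwise_of_maps_to (s := Finset.univ) (t := Finset.univ.image j) (g := j)
      (fun i hi => Finset.mem_image_of_mem j hi)]
    refine (Finset.sum_le_sum hclass).trans ?_
    rw [← Finset.mul_sum]
    refine mul_le_mul_of_nonneg_left ?_ (by positivity)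
    rw [← tsum_geometric_of_lt_one hx0.le hx1]
    exact (summable_geometric_of_lt_one hx0.le hx1).sum_le_tsum _ (fun _ _ => by positivity)
  have hS0 : 0 ≤ ∑ i, w i ^ s := Finset.sum_nonneg fun i _ => Real.rpow_nonneg (hw0 i).le _
  have := hCS.trans (mul_le_mul_of_nonneg_left hsum hS0)
  have h2 : N ^ 2 * 1 ≤ N ^ 2 * ((∑ i, w i ^ s) * (2 ^ s * B * (1 - x)⁻¹)) := by
    calc N ^ 2 * 1 = N ^ 2 := mul_one _
      _ ≤ _ := this
      _ = _ := by ring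
  exact le_of_mul_le_mul_left h2 (by positivity)

/-! ### Size of the test set and choice of parameters -/

/-- Chebyshev's lower bound, in the weak form `π(x) / 2 ≥ x^{1-η}`. -/
lemma pc_primes {η : ℝ} (hη : 0 < η) (hη1 : η ≤ 1) :
    ∀ᶠ x : ℝ in atTop, x ^ (1 - η) ≤ ((Nat.primeCounting ⌊x⌋₊ / 2 : ℕ) : ℝ) := by
  have h1 : ∀ᶠ x : ℝ in atTop, Real.log x ≤ 1/32 * x ^ η := by
    have := (isLittleO_log_rpow_atTop hη).bound (by norm_num : (0:ℝ) < 1/32)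
    filter_upwards [this, eventually_ge_atTop 1] with x hx hx1
    rw [Real.norm_eq_abs, Real.norm_eq_abs,
      abs_of_nonneg (Real.rpow_nonneg (by linarith) _)] at hx
    exact (le_abs_self _).trans hx
  have h2 : ∀ᶠ x : ℝ in atTop, Real.log (x + 2) ≤ 1/8 * (x + 2) := by
    have h := Real.isLittleO_log_id_atTop.bound (by norm_num : (0:ℝ) < 1/8)
    have h' := (tendsto_atTop_add_const_right atTop (2:ℝ) tendsto_id).eventually h
    filter_upwards [h', eventually_ge_atTop 1] with x hx hx1
    simp only [id, Real.norm_eq_abs] at hx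
    rw [abs_of_nonneg (by linarith : (0:ℝ) ≤ x + 2)] at hx
    exact (le_abs_self _).trans hx
  filter_upwards [h1, h2, eventually_ge_atTop 10] with x hx1 hx2 hx
  have h3 := (Chebyshev.psi_ge' (by linarith : (0:ℝ) ≤ x)).trans
    (Chebyshev.psi_le_primeCounting_mul_log' x)
  have hlog2 := Real.log_two_gt_d9
  have h4 : x / 4 ≤ (x - 1) * Real.log 2 - Real.log (x + 2) := by nlinarith
  have h5 := h4.trans h3
  have hlog : 0 < Real.log x := Real.log_pos (by linarith)
  have hxη : x ^ (1 - η) * x ^ η = x := by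
    rw [← Real.rpow_add (by linarith)]; simp
  have hpos : 1 ≤ x ^ (1 - η) := Real.one_le_rpow (by linarith) (by linarith)
  have h6 : 8 * x ^ (1-η) * Real.log x ≤ x / 4 := by nlinarith
  have h7 : 8 * x ^ (1-η) ≤ (Nat.primeCounting ⌊x⌋₊ : ℝ) :=
    le_of_mul_le_mul_right (h6.trans h5) hlog
  have h8 : (Nat.primeCounting ⌊x⌋₊ : ℝ) ≤ 2 * ((Nat.primeCounting ⌊x⌋₊ / 2 : ℕ) : ℝ) + 1 := by
    have : Nat.primeCounting ⌊x⌋₊ ≤ 2 * (Nat.primeCounting ⌊x⌋₊ / 2) + 1 := by omega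
    exact_mod_cast this
  linarith

/-- At least half of the primes `q ≤ X` exceed `m = π(X) / 2`, and each of these admits all
numerators up to `m`. -/
lemma pcA_card (n : ℕ) (X : ℝ) :
    (Nat.primeCounting ⌊X⌋₊ / 2) ^ (n + 1) ≤ (pcA n X).card := by
  set Q := ⌊X⌋₊
  set m := Nat.primeCounting Q / 2 with hm
  set P := (Nat.primesLE Q).filter (fun q => m < q) with hP
  have hPc : m ≤ P.card := by
    have h1 : Nat.primesLE Q ⊆ P ∪ Finset.Icc 1 m := by
      intro q hq
      simp only [hP, Finset.mem_union, Finset.mem_filter, Finset.mem_Icc]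
      by_cases h : m < q
      · exact Or.inl ⟨hq, h⟩
      · exact Or.inr ⟨(Nat.mem_primesLE.1 hq).2.pos, by omega⟩
    have h2 := (Finset.card_le_card h1).trans (Finset.card_union_le _ _)
    rw [Nat.primesLE_card_eq_primeCounting, Nat.card_Icc] at h2
    omega
  have hsub : P ×ˢ Fintype.piFinset (fun _ : Fin n => Finset.Icc 1 m) ⊆ pcA n X := by
    intro a ha
    obtain ⟨h1, h2⟩ := Finset.mem_product.1 ha
    obtain ⟨h3, h4⟩ := Finset.mem_filter.1 h1
    obtain ⟨h5, h6⟩ := Nat.mem_primesLE.1 h3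
    rw [Fintype.mem_piFinset] at h2
    rw [mem_pcA]
    refine ⟨⟨⟨h6.pos, h5⟩, fun i => ?_⟩, h6, fun i => ?_⟩
    · have := Finset.mem_Icc.1 (h2 i)
      exact ⟨this.1, by omega⟩
    · have := Finset.mem_Icc.1 (h2 i)
      omega
  have h := Finset.card_le_card hsub
  rw [Finset.card_product, Fintype.card_piFinset] at h
  simp only [Finset.prod_const, Finset.card_univ, Fintype.card_fin, Nat.card_Icc,
    Nat.add_sub_cancel] at h
  calc m ^ (n+1) = m * m ^ n := pow_succ' _ _
    _ ≤ P.card * m ^ n := Nat.mul_le_mul_right _ hPc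
    _ ≤ _ := h

/-- The pair count is dominated by `r^σ X^{2(n+1)-κ}` over the whole range of scales `r`. The three
hypotheses on `κ` handle, in turn, pairs with distinct denominators, and pairs with equal
denominators at scales `r ≤ 1/X` and `r ≥ 1/X`. -/
lemma pc_params {n : ℕ} {t X r β θ σ κ : ℝ} (ht : 0 < t) (hX : 1 ≤ X) (hσ0 : (n:ℝ) < σ)
    (hσ1 : σ < n + 1)
    (h1 : t + κ ≤ β * (n + 1 - σ)) (h2 : β / θ * σ ≤ n + 1 - κ) (h3 : κ ≤ n + 1 - σ)
    (hr1 : X ^ (-(β/θ)) ≤ r) (hr2 : r ≤ 2 * X ^ (-β)) :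
    X * (2 * (r * X ^ (t+1) / t)) * (2 * (r * X ^ 2)) ^ n + X * X ^ n * (2 * (r * X) + 1) ^ n ≤
      (2 ^ (n+1) * 2 ^ ((n:ℝ) + 1 - σ) / t + 3 ^ n) * r ^ σ * X ^ (2 * ((n:ℝ) + 1) - κ) := by
  have hX0 : 0 < X := by linarith
  have hr0 : 0 < r := (Real.rpow_pos_of_pos hX0 _).trans_le hr1
  have hn0 : (0:ℝ) ≤ n := n.cast_nonneg
  have T1 : X * (2 * (r * X ^ (t+1) / t)) * (2 * (r * X ^ 2)) ^ n ≤
      2 ^ (n+1) * 2 ^ ((n:ℝ) + 1 - σ) / t * r ^ σ * X ^ (2 * ((n:ℝ) + 1) - κ) := by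
    have e1 : X * (2 * (r * X ^ (t+1) / t)) * (2 * (r * X ^ 2)) ^ n =
        2 ^ (n+1) / t * (r ^ ((n:ℝ)+1) * X ^ (2 * ((n:ℝ)+1) + t)) := by
      have a1 : r ^ ((n:ℝ)+1) = r * r ^ n := by
        rw [Real.rpow_add_one hr0.ne', Real.rpow_natCast]; ring
      have a2 : X ^ (2 * ((n:ℝ)+1) + t) = X * X ^ (t+1) * (X ^ 2) ^ n := by
        rw [← pow_mul, ← Real.rpow_natCast X (2*n), mul_comm X, ← Real.rpow_add_one hX0.ne',
          ← Real.rpow_add hX0]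
        congr 1; push_cast; ring
      rw [a1, a2, mul_pow, mul_pow, pow_succ]; ring
    have e2 : r ^ ((n:ℝ)+1) ≤ r ^ σ * (2 ^ ((n:ℝ) + 1 - σ) * X ^ (-(t + κ))) := by
      calc r ^ ((n:ℝ)+1) = r ^ σ * r ^ ((n:ℝ)+1-σ) := by
            rw [← Real.rpow_add hr0]; congr 1; ring
        _ ≤ r ^ σ * (2 * X ^ (-β)) ^ ((n:ℝ)+1-σ) := by
            gcongr
        _ = r ^ σ * (2 ^ ((n:ℝ)+1-σ) * X ^ (-(β * ((n:ℝ)+1-σ)))) := by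
            rw [Real.mul_rpow (by norm_num) (by positivity), ← Real.rpow_mul hX0.le]
            congr 3; ring
        _ ≤ _ := by gcongr
    rw [e1]
    calc 2 ^ (n+1) / t * (r ^ ((n:ℝ)+1) * X ^ (2 * ((n:ℝ)+1) + t)) ≤ 2 ^ (n+1) / t *
          (r ^ σ * (2 ^ ((n:ℝ) + 1 - σ) * X ^ (-(t + κ))) * X ^ (2 * ((n:ℝ)+1) + t)) := by gcongr
      _ = 2 ^ (n+1) * 2 ^ ((n:ℝ) + 1 - σ) / t * r ^ σ *
          (X ^ (-(t + κ)) * X ^ (2 * ((n:ℝ)+1) + t)) := by ring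
      _ = _ := by rw [← Real.rpow_add hX0]; congr 2; ring
  have T2 : X * X ^ n * (2 * (r * X) + 1) ^ n ≤ 3 ^ n * r ^ σ * X ^ (2 * ((n:ℝ) + 1) - κ) := by
    have e0 : X * X ^ n = X ^ ((n:ℝ)+1) := by
      rw [Real.rpow_add_one hX0.ne', Real.rpow_natCast]; ring
    rcases le_total (r * X) 1 with h | h
    · have e1 : X ^ (-((n:ℝ) + 1 - κ)) ≤ r ^ σ := by
        calc X ^ (-((n:ℝ) + 1 - κ)) ≤ X ^ (-(β/θ) * σ) := by
              apply Real.rpow_le_rpow_of_exponent_le hX; linarith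
          _ = (X ^ (-(β/θ))) ^ σ := Real.rpow_mul hX0.le _ _
          _ ≤ r ^ σ := by gcongr; linarith
      calc X * X ^ n * (2 * (r * X) + 1) ^ n ≤ X ^ ((n:ℝ)+1) * 3 ^ n := by
            rw [e0]; gcongr; linarith
        _ = 3 ^ n * X ^ (-((n:ℝ) + 1 - κ)) * X ^ (2 * ((n:ℝ) + 1) - κ) := by
            rw [mul_assoc (3 ^ n : ℝ), ← Real.rpow_add hX0, mul_comm]; congr 2; ring
        _ ≤ _ := by gcongr
    · have e1 : X ^ (-(σ - n)) ≤ r ^ (σ - n) := by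
        rw [Real.rpow_neg hX0.le, ← Real.inv_rpow hX0.le]
        apply Real.rpow_le_rpow (by positivity) _ (by linarith)
        rw [inv_le_iff_one_le_mul₀ hX0]; exact h
      have e2 : r ^ σ = r ^ (σ - n) * r ^ n := by
        rw [← Real.rpow_natCast, ← Real.rpow_add hr0]; congr 1; ring
      calc X * X ^ n * (2 * (r * X) + 1) ^ n ≤ X * X ^ n * (3 * (r * X)) ^ n := by
            gcongr; linarith
        _ = 3 ^ n * r ^ n * X ^ (2 * (n:ℝ) + 1) := by
            rw [mul_pow, mul_pow, two_mul, add_assoc, Real.rpow_add hX0, Real.rpow_natCast, ← e0]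
            ring
        _ ≤ 3 ^ n * r ^ n * X ^ (-(σ - n) + (2 * ((n:ℝ) + 1) - κ)) := by
            refine mul_le_mul_of_nonneg_left
              (Real.rpow_le_rpow_of_exponent_le hX (by linarith)) (by positivity)
        _ = 3 ^ n * (X ^ (-(σ - n)) * r ^ n) * X ^ (2 * ((n:ℝ) + 1) - κ) := by
            rw [Real.rpow_add hX0]; ring
        _ ≤ 3 ^ n * (r ^ (σ - n) * r ^ n) * X ^ (2 * ((n:ℝ) + 1) - κ) := by gcongr
        _ = _ := by rw [← e2]
  calc _ ≤ _ := add_le_add T1 T2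
    _ = _ := by ring

/-- Uniform lower bound for the cost of covers of the graph with diameters in `[δ^{1/θ}, δ]`, at
any exponent below `d²θ/(dθ+t)`. The test set consists of the points with prime denominator at
most `X = δ^{-d/(dθ+t)}`, the cut-off at which the off-diagonal pairs at scale `δ` and the diagonal
pairs at scale `δ^{1/θ}` both have the density corresponding to the exponent `d²θ/(dθ+t)`. -/
lemma pc_lower {d : ℕ} (hd : 2 ≤ d) {t θ s : ℝ} (ht : 0 < t) (hθ : 0 < θ)
    (hs1 : (d:ℝ) - 1 < s) (hs2 : s < (d:ℝ)^2*θ/((d:ℝ)*θ+t)) :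
    ∃ c : ℝ, 0 < c ∧ ∃ δ₀ : ℝ, 0 < δ₀ ∧ δ₀ ≤ 1 ∧ ∀ δ : ℝ, 0 < δ → δ < δ₀ →
    ∀ (m : ℕ) (U : Fin m → Set (EuclideanSpace ℝ (Fin d))),
      Gset t d ⊆ (⋃ i, U i) → (∀ i, δ ^ (1/θ) ≤ Metric.diam (U i) ∧ Metric.diam (U i) ≤ δ) →
      c ≤ ∑ i, Metric.diam (U i) ^ s := by
  have hd2 : (2:ℝ) ≤ d := by exact_mod_cast hd
  have hn1 : ((d-1:ℕ):ℝ) + 1 = d := by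
    rw [Nat.cast_sub (by omega)]; push_cast; ring
  set n := d - 1 with hn
  have hnd : n + 1 = d := by omega
  set D : ℝ := (d:ℝ)^2*θ/((d:ℝ)*θ+t) with hD
  set σ : ℝ := (s + D) / 2 with hσ
  set a : ℝ := d / ((d:ℝ)*θ+t) with ha
  set β : ℝ := ((d:ℝ)*θ+t) / d with hβ
  have hden : 0 < (d:ℝ)*θ+t := by positivity
  have ha0 : 0 < a := by positivity
  have hβ0 : 0 < β := by positivity
  have haβ : a * β = 1 := by rw [ha, hβ]; field_simp
  have hβD : β * D = d * θ := by rw [hD, hβ]; field_simp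
  have hβt : β * d = d * θ + t := by rw [hβ]; field_simp
  have hDd : D < d := by
    by_contra! h
    have := mul_le_mul_of_nonneg_left h hβ0.le
    linarith
  have hσD : σ < D := by linarith
  have hsσ : s < σ := by linarith
  set g := β * (D - σ) with hg
  have hg0 : 0 < g := mul_pos hβ0 (by linarith)
  set κ : ℝ := min (min g (g / θ)) (d - σ) with hκ
  have hκ0 : 0 < κ := by
    rw [hκ]; exact lt_min (lt_min hg0 (by positivity)) (by linarith)
  have hκ1 : κ ≤ g := (min_le_left _ _).trans (min_le_left _ _)
  have hκ2 : κ ≤ g / θ := (min_le_left _ _).trans (min_le_right _ _)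
  have hκ3 : κ ≤ d - σ := min_le_right _ _
  have hη0 : 0 < κ / (2 * d) := by positivity
  have hη1 : κ / (2 * d) ≤ 1 := by
    rw [div_le_one (by positivity)]; linarith
  set B : ℝ := 2 ^ (n+1) * 2 ^ ((n:ℝ) + 1 - σ) / t + 3 ^ n with hB
  have hB0 : 0 < B := by positivity
  have hhalf : ((1:ℝ)/2) ^ (σ - s) < 1 :=
    Real.rpow_lt_one (by norm_num) (by norm_num) (by linarith)
  set M : ℝ := 2 ^ s * B * (1 - (1/2) ^ (σ - s))⁻¹ with hM
  have hM0 : 0 < M := by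
    have : 0 < 1 - ((1:ℝ)/2) ^ (σ - s) := by linarith
    positivity
  have hT : Tendsto (fun δ : ℝ => δ ^ (-a)) (nhdsWithin 0 (Set.Ioi 0)) atTop :=
    tendsto_rpow_neg_nhdsGT_zero (by linarith)
  have hev : ∀ᶠ δ : ℝ in nhdsWithin 0 (Set.Ioi 0), 1 ≤ δ ^ (-a) ∧
      (δ ^ (-a)) ^ (1 - κ / (2 * d)) ≤ ((Nat.primeCounting ⌊δ ^ (-a)⌋₊ / 2 : ℕ) : ℝ) :=
    hT.eventually ((eventually_ge_atTop 1).and (pc_primes hη0 hη1))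
  obtain ⟨δ₀, h0, h1, hδ₀⟩ := pc_exists_threshold hev
  refine ⟨M⁻¹, by positivity, δ₀, h0, h1, fun δ hδ hδlt m U hcov hU => ?_⟩
  obtain ⟨hX, hcard⟩ := hδ₀ δ hδ hδlt
  set X := δ ^ (-a) with hXdef
  have hX0 : 0 < X := by linarith
  have e1 : X ^ (-β) = δ := by
    rw [hXdef, ← Real.rpow_mul hδ.le, neg_mul_neg, haβ, Real.rpow_one]
  have e2 : X ^ (-(β/θ)) = δ ^ (1/θ) := by
    rw [hXdef, ← Real.rpow_mul hδ.le]; congr 1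
    rw [neg_mul_neg, ← mul_div_assoc, haβ]
  have hw0 : ∀ i, 0 < Metric.diam (U i) := fun i =>
    (Real.rpow_pos_of_pos hδ _).trans_le (hU i).1
  have hbd : ∀ i, Bornology.IsBounded (U i) := fun i => by
    by_contra hb
    have := hw0 i
    rw [Metric.diam_eq_zero_of_unbounded hb] at this
    exact lt_irrefl _ this
  -- the number of test points is at least `X ^ (d - κ / 2)`
  have hcard' : X ^ ((d:ℝ) - κ / 2) ≤ ((pcA n X).card : ℝ) := by
    calc X ^ ((d:ℝ) - κ / 2) = (X ^ (1 - κ / (2 * d))) ^ d := by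
          rw [← Real.rpow_natCast, ← Real.rpow_mul hX0.le]; congr 1; field_simp
      _ ≤ ((Nat.primeCounting ⌊X⌋₊ / 2 : ℕ) : ℝ) ^ d := by gcongr
      _ ≤ _ := by rw [← hnd]; exact_mod_cast pcA_card n X
  have hcard2 : X ^ (2 * ((n:ℝ) + 1) - κ) ≤ ((pcA n X).card : ℝ) ^ 2 := by
    calc X ^ (2 * ((n:ℝ) + 1) - κ) = (X ^ ((d:ℝ) - κ / 2)) ^ 2 := by
          rw [← Real.rpow_natCast, ← Real.rpow_mul hX0.le]; congr 1; rw [hn1]; push_cast; ring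
      _ ≤ _ := by gcongr
  have hne : (pcA n X).Nonempty := by
    rw [← Finset.card_pos]
    have : (0:ℝ) < (pcA n X).card := (Real.rpow_pos_of_pos hX0 _).trans_le hcard'
    exact_mod_cast this
  have hex : ∀ b : ℕ × (Fin n → ℕ), ∃ i : Fin m, b ∈ pcA n X →
      pcPt d (fun i => (b.2 i : ℝ) / b.1) ((b.1 : ℝ) ^ (-t)) ∈ U i := by
    have key : ∀ b ∈ pcA n X, ∃ i : Fin m,
        pcPt d (fun i => (b.2 i : ℝ) / b.1) ((b.1 : ℝ) ^ (-t)) ∈ U i := by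
      intro b hb
      obtain ⟨⟨-, h1⟩, h2, h3⟩ := mem_pcA.1 hb
      have hq : (0:ℝ) < b.1 := by exact_mod_cast h2.pos
      have hG : pcPt d (fun i => (b.2 i : ℝ) / b.1) ((b.1 : ℝ) ^ (-t)) ∈ Gset t d := by
        rw [mem_Gset_iff]
        refine ⟨fun i => (b.2 i : ℝ) / b.1, fun i => ⟨by positivity, ?_⟩, ?_⟩
        · rw [div_le_one hq]; exact_mod_cast (h3 i).le
        · rw [popcornFun_eq hd fun i => ⟨(h1 i).1, h3 i,
            (Nat.coprime_of_lt_prime (by have := (h1 i).1; omega) (h3 i) h2).symm⟩]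
      exact Set.mem_iUnion.1 (hcov hG)
    intro b
    by_cases hb : b ∈ pcA n X
    · obtain ⟨i, hi⟩ := key b hb
      exact ⟨i, fun _ => hi⟩
    · obtain ⟨b', hb'⟩ := hne
      obtain ⟨i, hi⟩ := key b' hb'
      exact ⟨i, fun h => absurd h hb⟩
  choose f hf using hex
  have hmain := pc_energy (pcA n X) (fun r => pcNear t r)
    (fun r r' a b h hab => ⟨hab.1.trans h, fun i => (hab.2 i).trans h⟩) f
    (fun i => Metric.diam (U i)) (ρ := δ ^ (1/θ)) (δ := δ) (B := B) (s := s) (σ := σ)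
    (Real.rpow_pos_of_pos hδ _) (by linarith) hsσ hU ?_ (by linarith) ?_ hne
  · rw [inv_le_iff_one_le_mul₀ hM0]
    exact hmain
  · intro b hb b' hb' hbb
    have hdist := Metric.dist_le_diam_of_mem (hbd (f b)) (hf b hb) (hbb ▸ hf b' hb')
    have hco : ∀ j : Fin d, |pcPt d (fun i => (b.2 i : ℝ) / b.1) ((b.1 : ℝ) ^ (-t)) j -
        pcPt d (fun i => (b'.2 i : ℝ) / b'.1) ((b'.1 : ℝ) ^ (-t)) j| ≤ Metric.diam (U (f b)) := by
      intro j
      refine le_trans ?_ hdist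
      rw [dist_eq_norm]
      exact PiLp.norm_apply_le (pcPt d (fun i => (b.2 i : ℝ) / b.1) ((b.1 : ℝ) ^ (-t)) -
        pcPt d (fun i => (b'.2 i : ℝ) / b'.1) ((b'.1 : ℝ) ^ (-t))) j
    refine ⟨?_, fun i => ?_⟩
    · have := hco ⟨d - 1, by omega⟩
      rwa [pcPt_last _ _ _ _ rfl, pcPt_last _ _ _ _ rfl] at this
    · have := hco (Fin.castLE (Nat.sub_le d 1) i)
      rwa [pcPt_castLE, pcPt_castLE] at this
  · intro r hr1 hr2
    have hr0 : 0 < r := (Real.rpow_pos_of_pos hδ _).trans_le hr1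
    refine (pc_pairs ht hX hr0.le).trans ?_
    refine (pc_params (β := β) (θ := θ) (σ := σ) (κ := κ) ht hX (by linarith) (by linarith)
      ?_ ?_ (by linarith) (by rw [e2]; exact hr1) (by rw [e1]; exact hr2)).trans ?_
    · rw [hn1]
      have : β * (d - σ) = t + g := by rw [hg]; linarith
      linarith
    · rw [hn1]
      have : β / θ * σ = d - g / θ := by
        rw [hg]; field_simp; linarith
      linarith
    · gcongr

/-! ### From cost estimates to dimensions -/

lemma pc_sInf_eq {T : Set ℝ} {D : ℝ} (h1 : ∀ s ∈ T, D ≤ s) (h2 : ∀ s, D < s → s ∈ T) :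
    sInf T = D := by
  have hlb : BddBelow T := ⟨D, fun s hs => h1 s hs⟩
  apply le_antisymm
  · apply le_of_forall_gt_imp_ge_of_dense
    intro s hs
    exact csInf_le hlb (h2 s hs)
  · exact le_csInf ⟨D + 1, h2 _ (by linarith)⟩ h1

/-- Reduction of the intermediate dimensions to uniform cost estimates: cheap covers of `F` at
every exponent above `D`, and a positive lower bound for the cost of covers of `G` at exponents
dominating every exponent below `D`. -/
lemma pc_dims_eq {d : ℕ} {t θ D : ℝ} (hθ : 0 < θ) (hD : 0 ≤ D)
    (hup : ∀ s, D < s → ∀ ε : ℝ, 0 < ε → ∃ δ₀ : ℝ, 0 < δ₀ ∧ δ₀ ≤ 1 ∧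
      ∀ δ : ℝ, 0 < δ → δ < δ₀ →
      ∃ (m : ℕ) (U : Fin m → Set (EuclideanSpace ℝ (Fin d))),
        Fset t d ⊆ (⋃ i, U i) ∧ (∀ i, δ ^ (1/θ) ≤ Metric.diam (U i) ∧ Metric.diam (U i) ≤ δ) ∧
        (∑ i, Metric.diam (U i) ^ s) ≤ ε)
    (hlow : ∀ s, s < D → ∃ s', s ≤ s' ∧ ∃ c : ℝ, 0 < c ∧ ∃ δ₀ : ℝ, 0 < δ₀ ∧ δ₀ ≤ 1 ∧
      ∀ δ : ℝ, 0 < δ → δ < δ₀ → ∀ (m : ℕ) (U : Fin m → Set (EuclideanSpace ℝ (Fin d))),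
      Gset t d ⊆ (⋃ i, U i) → (∀ i, δ ^ (1/θ) ≤ Metric.diam (U i) ∧ Metric.diam (U i) ≤ δ) →
      c ≤ ∑ i, Metric.diam (U i) ^ s') :
    upperIntDim d θ (Gset t d) = D ∧ lowerIntDim d θ (Gset t d) = D ∧
      upperIntDim d θ (Fset t d) = D ∧ lowerIntDim d θ (Fset t d) = D := by
  have hup' : ∀ S ⊆ Fset t d, ∀ s, D < s → ∀ ε : ℝ, 0 < ε → ∃ δ₀ : ℝ, 0 < δ₀ ∧ δ₀ ≤ 1 ∧
      ∀ δ : ℝ, 0 < δ → δ < δ₀ →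
      ∃ (m : ℕ) (U : Fin m → Set (EuclideanSpace ℝ (Fin d))),
        S ⊆ (⋃ i, U i) ∧ (∀ i, δ ^ (1/θ) ≤ Metric.diam (U i) ∧ Metric.diam (U i) ≤ δ) ∧
        (∑ i, Metric.diam (U i) ^ s) ≤ ε := by
    intro S hS s hs ε hε
    obtain ⟨δ₀, h0, h1, h⟩ := hup s hs ε hε
    refine ⟨δ₀, h0, h1, fun δ hδ hδ' => ?_⟩
    obtain ⟨m, U, hU, hU'⟩ := h δ hδ hδ'
    exact ⟨m, U, hS.trans hU, hU'⟩
  have hlow' : ∀ S, Gset t d ⊆ S → ∀ s, (∀ ε : ℝ, 0 < ε → ∀ δ₀ : ℝ, 0 < δ₀ → δ₀ ≤ 1 →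
      ∃ δ : ℝ, 0 < δ ∧ δ < δ₀ ∧
      ∃ (m : ℕ) (U : Fin m → Set (EuclideanSpace ℝ (Fin d))),
        S ⊆ (⋃ i, U i) ∧ (∀ i, δ ^ (1/θ) ≤ Metric.diam (U i) ∧ Metric.diam (U i) ≤ δ) ∧
        (∑ i, Metric.diam (U i) ^ s) ≤ ε) → D ≤ s := by
    intro S hS s h
    by_contra! hs
    obtain ⟨s', hss, c, hc, δ₀, h0, h1, hb⟩ := hlow s hs
    obtain ⟨δ, hδ, hδ', m, U, hU, hU', hsum⟩ := h (c / 2) (by linarith) δ₀ h0 h1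
    have := hb δ hδ hδ' m U (hS.trans hU) hU'
    have h2 : ∑ i, Metric.diam (U i) ^ s' ≤ ∑ i, Metric.diam (U i) ^ s :=
      Finset.sum_le_sum fun i _ => Real.rpow_le_rpow_of_exponent_ge
        ((Real.rpow_pos_of_pos hδ _).trans_le (hU' i).1) (by linarith [(hU' i).2]) hss
    linarith
  have hU : ∀ S, Gset t d ⊆ S → S ⊆ Fset t d → upperIntDim d θ S = D := by
    intro S h1 h2
    rw [upperIntDim, if_neg hθ.ne']
    refine pc_sInf_eq (fun s hs => ?_) (fun s hs => ⟨by linarith, hup' S h2 s hs⟩)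
    refine hlow' S h1 s fun ε hε δ₀ h0 _ => ?_
    obtain ⟨δ₁, h3, -, h⟩ := hs.2 ε hε
    have hmin : 0 < min δ₀ δ₁ := lt_min h0 h3
    exact ⟨min δ₀ δ₁ / 2, by linarith, by linarith [min_le_left δ₀ δ₁],
      h _ (by linarith) (by linarith [min_le_right δ₀ δ₁])⟩
  have hL : ∀ S, Gset t d ⊆ S → S ⊆ Fset t d → lowerIntDim d θ S = D := by
    intro S h1 h2
    rw [lowerIntDim, if_neg hθ.ne']
    refine pc_sInf_eq (fun s hs => hlow' S h1 s hs.2) (fun s hs => ⟨by linarith, ?_⟩)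
    intro ε hε δ₀ h0 _
    obtain ⟨δ₁, h3, -, h⟩ := hup' S h2 s hs ε hε
    have hmin : 0 < min δ₀ δ₁ := lt_min h0 h3
    exact ⟨min δ₀ δ₁ / 2, by linarith, by linarith [min_le_left δ₀ δ₁],
      h _ (by linarith) (by linarith [min_le_right δ₀ δ₁])⟩
  have hGF := Gset_subset_Fset t d
  exact ⟨hU _ subset_rfl hGF, hL _ subset_rfl hGF, hU _ hGF subset_rfl, hL _ hGF subset_rfl⟩

lemma pc_dimH_Gset (t : ℝ) {d : ℕ} (hd : 2 ≤ d) : (dimH (Gset t d)).toReal = (d:ℝ) - 1 := by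
  rw [le_antisymm ((dimH_mono (Gset_subset_Fset t d)).trans dimH_Fset_le) dimH_Gset_ge,
    ENNReal.toReal_natCast, Nat.cast_sub (by omega), Nat.cast_one]

lemma pc_dimH_Fset (t : ℝ) {d : ℕ} (hd : 2 ≤ d) : (dimH (Fset t d)).toReal = (d:ℝ) - 1 := by
  rw [le_antisymm dimH_Fset_le (dimH_Gset_ge.trans (dimH_mono (Gset_subset_Fset t d))),
    ENNReal.toReal_natCast, Nat.cast_sub (by omega), Nat.cast_one]

/-- the intermediate dimensions of `G_{t,d}` and `F_{t,d}`. -/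
theorem intermediate_dimensions_of_popcorn_sets (d : ℕ) (hd : 2 ≤ d) (t : ℝ) (ht : 0 < t)
    (ht' : t < (d:ℝ)/((d:ℝ)-1)) (θ : ℝ) (hθ0 : 0 ≤ θ) (hθ1 : θ ≤ 1) :
    (θ ≤ ((d:ℝ)-1)*t/(d:ℝ) →
      upperIntDim d θ (Gset t d) = (d:ℝ) - 1 ∧ lowerIntDim d θ (Gset t d) = (d:ℝ) - 1 ∧
      upperIntDim d θ (Fset t d) = (d:ℝ) - 1 ∧ lowerIntDim d θ (Fset t d) = (d:ℝ) - 1) ∧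
    (((d:ℝ)-1)*t/(d:ℝ) < θ →
      upperIntDim d θ (Gset t d) = (d:ℝ)^2*θ/((d:ℝ)*θ+t) ∧
      lowerIntDim d θ (Gset t d) = (d:ℝ)^2*θ/((d:ℝ)*θ+t) ∧
      upperIntDim d θ (Fset t d) = (d:ℝ)^2*θ/((d:ℝ)*θ+t) ∧
      lowerIntDim d θ (Fset t d) = (d:ℝ)^2*θ/((d:ℝ)*θ+t)) := by
  have hd2 : (2:ℝ) ≤ d := by exact_mod_cast hd
  have hd1 : ((d-1:ℕ):ℝ) = (d:ℝ) - 1 := by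
    rw [Nat.cast_sub (by omega), Nat.cast_one]
  constructor
  · intro hθ
    rcases hθ0.eq_or_lt with rfl | hθpos
    · simp only [upperIntDim, lowerIntDim, if_true]
      exact ⟨pc_dimH_Gset t hd, pc_dimH_Gset t hd, pc_dimH_Fset t hd, pc_dimH_Fset t hd⟩
    · refine pc_dims_eq hθpos (by linarith) (fun s hs ε hε => ?_) (fun s hs => ?_)
      -- with the cut-off `δ^{-1/t}`, the points of larger denominator have height at most `δ`
      · refine pc_upper hd ht hθpos hθ1 (a := 1 / t) (by positivity) ?_ ?_ hs ε hε
        · refine lt_of_le_of_lt ?_ hs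
          rw [le_div_iff₀ (by linarith)] at hθ
          rw [mul_one_div, div_mul_eq_mul_div, div_le_iff₀ ht]
          linarith
        · rw [mul_one_div, div_self ht.ne']; exact hs
      · refine ⟨(d:ℝ) - 1, hs.le, (2 ^ (d - 1))⁻¹, by positivity, 1, one_pos, le_rfl,
          fun δ hδ _ m U hcov hU => ?_⟩
        have h := pc_volume_bound t hcov
          (fun i => (Real.rpow_pos_of_pos hδ _).trans_le (hU i).1)
        rw [inv_le_iff_one_le_mul₀ (by positivity), Finset.sum_mul]
        refine h.trans_eq (Finset.sum_congr rfl fun i _ => ?_)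
        rw [← hd1, Real.rpow_natCast, mul_pow, mul_comm]
  · intro hθ
    have hθpos : 0 < θ := by
      refine lt_of_le_of_lt ?_ hθ
      have : 0 ≤ (d:ℝ) - 1 := by linarith
      positivity
    have hden : 0 < (d:ℝ)*θ+t := by positivity
    have hD : (d:ℝ) - 1 < (d:ℝ)^2*θ/((d:ℝ)*θ+t) := by
      rw [div_lt_iff₀ (by linarith)] at hθ
      rw [lt_div_iff₀ hden]
      nlinarith
    refine pc_dims_eq hθpos (by positivity) (fun s hs ε hε => ?_) (fun s hs => ?_)
    · refine pc_upper hd ht hθpos hθ1 (a := d / ((d:ℝ)*θ+t)) (by positivity) ?_ ?_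
        (hD.trans hs) ε hε
      · refine lt_of_eq_of_lt ?_ hs
        field_simp
      · refine lt_of_eq_of_lt ?_ hs
        field_simp
        ring
    · refine ⟨max s (((d:ℝ) - 1 + (d:ℝ)^2*θ/((d:ℝ)*θ+t)) / 2), le_max_left _ _,
        pc_lower hd ht hθpos ?_ ?_⟩
      · exact lt_of_lt_of_le (by linarith) (le_max_right _ _)
      · exact max_lt hs (by linarith)
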